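/- Let N be a positive integer and q a complex number with 0 < |q| < 1. Then Σ_{n=0}^∞ q^n · (q^N;q)_n · (q^{1−N};q)_n / (q;q)_n = q^{N(N−1)}. (The sum is in fact finite: every term with n ≥ N vanishes, because (q^{1−N};q)_n = 0 for n ≥ N.) -/

import Mathlib

open Finset

/-- Finite q-Pochhammer symbol `(a;q)_n`. -/
noncomputable def qPoch (a q : ℂ) (n : ℕ) : ℂ := ∏ j ∈ Finset.range n, (1 - a * q ^ j)

/-!
The sum is the case `a = q ^ N`, `m = N - 1` of the q-Chu–Vandermonde formula with lower
parameter `0`, `∑ₙ qⁿ (a;q)ₙ (q⁻ᵐ;q)ₙ / (q;q)ₙ = aᵐ`. Write `S a b` for the series with `b` in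
place of `q⁻ᵐ`. From `(b;q)ₙ₊₁ = (bq;q)ₙ₊₁ - b (1 - qⁿ⁺¹) (bq;q)ₙ` and
`(a;q)ₙ₊₁ = (1 - a) (aq;q)ₙ` one gets `S a b = S a (bq) - bq (1 - a) S (aq) (bq)`. Each use of
this relation turns `b = q⁻ᵐ⁻¹` into `q⁻ᵐ`, so the formula follows by induction on `m`, for all
`a` simultaneously, starting from `b = 1`, where only the term `n = 0` survives.
-/

lemma qPoch_zero (a q : ℂ) : qPoch a q 0 = 1 :=
  prod_range_zero _

lemma qPoch_succ (a q : ℂ) (n : ℕ) : qPoch a q (n + 1) = qPoch a q n * (1 - a * q ^ n) :=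
  prod_range_succ _ _

lemma qPoch_succ' (a q : ℂ) (n : ℕ) : qPoch a q (n + 1) = (1 - a) * qPoch (a * q) q n := by
  simp only [qPoch, prod_range_succ', pow_zero, mul_one, pow_succ', mul_assoc, mul_comm (1 - a)]

lemma qPoch_succ_eq_sub (b q : ℂ) (n : ℕ) :
    qPoch b q (n + 1) = qPoch (b * q) q (n + 1) - b * (1 - q ^ (n + 1)) * qPoch (b * q) q n := by
  rw [qPoch_succ', qPoch_succ]
  ring

lemma qPoch_eq_zero_iff {a q : ℂ} {n : ℕ} : qPoch a q n = 0 ↔ ∃ j < n, a * q ^ j = 1 := by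
  simp only [qPoch, prod_eq_zero_iff, mem_range, sub_eq_zero, eq_comm (a := (1 : ℂ))]

lemma qPoch_inv_pow_eq_zero {q : ℂ} (hq : q ≠ 0) {m n : ℕ} (hmn : m < n) :
    qPoch (q ^ m)⁻¹ q n = 0 :=
  qPoch_eq_zero_iff.2 ⟨m, hmn, inv_mul_cancel₀ (pow_ne_zero m hq)⟩

/-- The `n`-th term of the basic hypergeometric series `₂φ₁(a, b; 0; q, q)`. -/
noncomputable def qHypergeometricTerm (a b q : ℂ) (n : ℕ) : ℂ :=
  q ^ n * qPoch a q n * qPoch b q n / qPoch q q n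

lemma qHypergeometricTerm_zero (a b q : ℂ) : qHypergeometricTerm a b q 0 = 1 := by
  simp only [qHypergeometricTerm, qPoch_zero, pow_zero, mul_one, div_one]

lemma qHypergeometricTerm_succ (a b : ℂ) {q : ℂ} {n : ℕ} (hn : q ^ (n + 1) ≠ 1) :
    qHypergeometricTerm a b q (n + 1) =
      qHypergeometricTerm a (b * q) q (n + 1)
        - b * q * (1 - a) * qHypergeometricTerm (a * q) (b * q) q n := by
  have hfactor : 1 - q ^ (n + 1) ≠ 0 := sub_ne_zero.2 hn.symm
  have hcancel :
      qHypergeometricTerm (a * q) (b * q) q n =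
        q ^ n * qPoch (a * q) q n * qPoch (b * q) q n * (1 - q ^ (n + 1)) / qPoch q q (n + 1) := by
    rw [qPoch_succ, ← pow_succ', mul_div_mul_right _ _ hfactor, qHypergeometricTerm]
  rw [hcancel, qHypergeometricTerm, qHypergeometricTerm, qPoch_succ_eq_sub b, qPoch_succ' a]
  ring

lemma hasSum_qHypergeometricTerm_of_mul {a b q s t : ℂ} (hq : ¬IsOfFinOrder q)
    (hs : HasSum (qHypergeometricTerm a (b * q) q) s)
    (ht : HasSum (qHypergeometricTerm (a * q) (b * q) q) t) :
    HasSum (qHypergeometricTerm a b q) (s - b * q * (1 - a) * t) := by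
  have hpow (n : ℕ) : q ^ (n + 1) ≠ 1 := fun h =>
    hq (isOfFinOrder_iff_pow_eq_one.2 ⟨n + 1, n.succ_pos, h⟩)
  rw [← hasSum_nat_add_iff' 1] at hs ⊢
  simp only [sum_range_one, qHypergeometricTerm_zero, qHypergeometricTerm_succ a b (hpow _)]
    at hs ⊢
  rw [sub_right_comm]
  exact hs.sub (ht.mul_left _)

lemma hasSum_qHypergeometricTerm_one (a q : ℂ) : HasSum (qHypergeometricTerm a 1 q) 1 := by
  have hvanish (n : ℕ) (hn : n ≠ 0) : qHypergeometricTerm a 1 q n = 0 := by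
    have hpoch : qPoch 1 q n = 0 :=
      qPoch_eq_zero_iff.2 ⟨0, Nat.pos_of_ne_zero hn, by rw [pow_zero, mul_one]⟩
    rw [qHypergeometricTerm, hpoch, mul_zero, zero_div]
  simpa only [qHypergeometricTerm_zero] using hasSum_single 0 hvanish

theorem hasSum_qHypergeometricTerm_inv_pow {q : ℂ} (hq0 : q ≠ 0) (hq : ¬IsOfFinOrder q) (m : ℕ)
    (a : ℂ) : HasSum (qHypergeometricTerm a (q ^ m)⁻¹ q) (a ^ m) := by
  induction m generalizing a with
  | zero => simpa only [pow_zero, inv_one] using hasSum_qHypergeometricTerm_one a q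
  | succ m ih =>
    have hshift : (q ^ (m + 1))⁻¹ * q = (q ^ m)⁻¹ := by
      rw [pow_succ, mul_inv, inv_mul_cancel_right₀ hq0]
    have hvalue : a ^ m - (q ^ m)⁻¹ * (1 - a) * (a * q) ^ m = a ^ (m + 1) := by
      field_simp
      ring
    rw [← hvalue, ← hshift]
    apply hasSum_qHypergeometricTerm_of_mul hq <;> rw [hshift]
    exacts [ih a, ih (a * q)]

theorem statement6_general (N : ℕ) (hN : 1 ≤ N) {q : ℂ} (hq0 : q ≠ 0) (hq : ¬IsOfFinOrder q)
    (a : ℂ) :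
    (∀ n : ℕ, N ≤ n → qPoch (q ^ (1 - (N : ℤ))) q n = 0) ∧
    HasSum (fun n : ℕ => q ^ n * qPoch a q n * qPoch (q ^ (1 - (N : ℤ))) q n / qPoch q q n)
      (a ^ (N - 1)) := by
  have hparam : q ^ (1 - (N : ℤ)) = (q ^ (N - 1))⁻¹ := by
    rw [← zpow_natCast, ← zpow_neg, Nat.cast_pred hN, neg_sub]
  rw [hparam]
  exact ⟨fun n hn => qPoch_inv_pow_eq_zero hq0 (Nat.sub_one_lt_of_le hN hn),
    hasSum_qHypergeometricTerm_inv_pow hq0 hq (N - 1) a⟩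

/-- `Σ_{n≥0} q^n (q^N;q)_n (q^{1−N};q)_n / (q;q)_n = q^{N(N−1)}`; moreover the sum is in fact
    finite since `(q^{1−N};q)_n = 0` for `n ≥ N`. -/
theorem statement6 (N : ℕ) (hN : 1 ≤ N) (q : ℂ) (hq0 : 0 < ‖q‖) (hq1 : ‖q‖ < 1) :
    (∀ n : ℕ, N ≤ n → qPoch (q ^ (1 - (N : ℤ))) q n = 0) ∧
    ∑' n : ℕ, q ^ n * qPoch (q ^ (N : ℤ)) q n * qPoch (q ^ (1 - (N : ℤ))) q n / qPoch q q n
      = q ^ (N * (N - 1)) := by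
  rw [pow_mul, ← zpow_natCast q N]
  exact (statement6_general N hN (norm_pos_iff.1 hq0) (fun h => hq1.ne h.norm_eq_one) _).imp_right
    HasSum.tsum_eq
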